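/- For all integers N ≥ 0 and h ≥ 1, the Gaussian coefficient [2N+2h choose h-1] satisfies [2N+2h choose h-1] = Σ_{k=0}^{⌊(h-1)/2⌋} Σ_{j=k}^{h-k-1} q^{k(N+k+1) + j(N+j+1)} · [N+h choose j] · [j choose k] · [N+h-j choose h-j-k-1]. -/

import Mathlib

open Finset

noncomputable section

/-- The variable `q`, as a rational function over `ℚ`. -/
def q : RatFunc ℚ := RatFunc.X

/-- The `q`-integer `[n] = (1 - q^n)/(1 - q)`. -/
def qint (n : ℕ) : RatFunc ℚ := (1 - q ^ n) / (1 - q)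

/-- The `q`-factorial `[n]! = [1][2]⋯[n]`, with `[0]! = 1`. -/
def qfact (n : ℕ) : RatFunc ℚ := ∏ i ∈ Finset.range n, qint (i + 1)

/-- The Gaussian (q-binomial) coefficient `[N choose K]`, equal to
`[N]!/([K]![N-K]!)` if `0 ≤ K ≤ N`, and `0` otherwise. -/
def qbinom (N K : ℤ) : RatFunc ℚ :=
  if 0 ≤ K ∧ K ≤ N then qfact N.toNat / (qfact K.toNat * qfact (N - K).toNat) else 0

theorem one_sub_q_pow_ne_zero (n : ℕ) : (1 : RatFunc ℚ) - q ^ (n + 1) ≠ 0 := by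
  intro h
  have hX : algebraMap (Polynomial ℚ) (RatFunc ℚ) (Polynomial.X ^ (n + 1)) =
      algebraMap (Polynomial ℚ) (RatFunc ℚ) 1 := by
    rw [map_pow, RatFunc.algebraMap_X, map_one]
    exact (sub_eq_zero.mp h).symm
  have hd := congrArg Polynomial.natDegree (RatFunc.algebraMap_injective ℚ hX)
  simp at hd

theorem one_sub_q_ne_zero : (1 : RatFunc ℚ) - q ≠ 0 := by
  simpa using one_sub_q_pow_ne_zero 0

theorem qint_succ_ne_zero (n : ℕ) : qint (n + 1) ≠ 0 :=
  div_ne_zero (one_sub_q_pow_ne_zero n) one_sub_q_ne_zero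

theorem qint_add (a b : ℕ) : qint (a + b) = qint a + q ^ a * qint b := by
  have := one_sub_q_ne_zero
  unfold qint
  field_simp
  ring

theorem qfact_succ (n : ℕ) : qfact (n + 1) = qfact n * qint (n + 1) :=
  Finset.prod_range_succ _ _

theorem qfact_ne_zero (n : ℕ) : qfact n ≠ 0 :=
  Finset.prod_ne_zero_iff.mpr fun i _ => qint_succ_ne_zero i

theorem qbinom_add_natCast (i d : ℕ) :
    qbinom ((i + d : ℕ) : ℤ) (i : ℤ) = qfact (i + d) / (qfact i * qfact d) := by
  have h : (((i + d : ℕ) : ℤ) - (i : ℤ)).toNat = d := by omega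
  rw [qbinom, if_pos (by omega), h, Int.toNat_natCast, Int.toNat_natCast]

theorem qbinom_eq_zero_of_lt {m i : ℤ} (h : m < i) : qbinom m i = 0 :=
  if_neg (by omega)

theorem qbinom_eq_zero_of_neg {m i : ℤ} (h : i < 0) : qbinom m i = 0 :=
  if_neg (by omega)

theorem qbinom_zero_right (m : ℕ) : qbinom (m : ℤ) 0 = 1 := by
  have h := qbinom_add_natCast 0 m
  have hm := qfact_ne_zero m
  rw [zero_add, Nat.cast_zero] at h
  rw [h, show qfact 0 = 1 from Finset.prod_range_zero _, one_mul, div_self hm]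

theorem qbinom_self (m : ℕ) : qbinom (m : ℤ) (m : ℤ) = 1 := by
  have h := qbinom_add_natCast m 0
  have hm := qfact_ne_zero m
  rw [add_zero] at h
  rw [h, show qfact 0 = 1 from Finset.prod_range_zero _, mul_one, div_self hm]

/-- The `q`-Pascal rule. -/
theorem qbinom_succ_succ (m i : ℕ) :
    qbinom ((m + 1 : ℕ) : ℤ) ((i + 1 : ℕ) : ℤ) =
      qbinom (m : ℤ) ((i + 1 : ℕ) : ℤ) + q ^ (m - i) * qbinom (m : ℤ) (i : ℤ) := by
  rcases lt_trichotomy m i with h | rfl | h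
  · rw [qbinom_eq_zero_of_lt (by omega), qbinom_eq_zero_of_lt (by omega),
      qbinom_eq_zero_of_lt (by omega)]
    ring
  · rw [qbinom_self, qbinom_self, qbinom_eq_zero_of_lt (by omega)]
    simp
  · obtain ⟨d, rfl⟩ := Nat.exists_eq_add_of_lt h
    have h₁ := qbinom_add_natCast (i + 1) (d + 1)
    have h₂ := qbinom_add_natCast (i + 1) d
    have h₃ := qbinom_add_natCast i (d + 1)
    rw [show i + 1 + (d + 1) = i + d + 1 + 1 by ring] at h₁
    rw [show i + 1 + d = i + d + 1 by ring] at h₂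
    rw [← add_assoc] at h₃
    rw [h₁, h₂, h₃, show i + d + 1 - i = d + 1 by omega, qfact_succ (i + d + 1), qfact_succ i,
      qfact_succ d, show i + d + 1 + 1 = (d + 1) + (i + 1) by ring, qint_add (d + 1) (i + 1)]
    have := qfact_ne_zero i
    have := qfact_ne_zero d
    have := qint_succ_ne_zero i
    have := qint_succ_ne_zero d
    field_simp

/-- The `q`-Vandermonde convolution. -/
theorem qbinom_add_eq_sum_antidiagonal (m n r : ℕ) :
    qbinom ((m + n : ℕ) : ℤ) (r : ℤ) =
      ∑ p ∈ Finset.HasAntidiagonal.antidiagonal r,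
        q ^ (p.1 * (n - p.2)) * qbinom (m : ℤ) (p.1 : ℤ) * qbinom (n : ℤ) (p.2 : ℤ) := by
  induction m generalizing r with
  | zero =>
    rw [Finset.sum_eq_single (0, r)]
    · simp [show qbinom 0 0 = 1 from qbinom_zero_right 0]
    · rintro ⟨a, b⟩ hab hne
      rw [Finset.HasAntidiagonal.mem_antidiagonal] at hab
      have ha : 0 < a := by
        rcases Nat.eq_zero_or_pos a with rfl | ha
        · exact absurd (by simpa using hab) hne
        · exact ha
      rw [qbinom_eq_zero_of_lt (by exact_mod_cast ha)]
      ring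
    · simp
  | succ m ih =>
    cases r with
    | zero =>
      simp only [Finset.Nat.antidiagonal_zero, Finset.sum_singleton, Nat.cast_zero,
        qbinom_zero_right, zero_mul, pow_zero, mul_one]
    | succ r =>
      rw [show m + 1 + n = m + n + 1 by ring, qbinom_succ_succ, ih, ih,
        Finset.Nat.sum_antidiagonal_succ, Finset.Nat.sum_antidiagonal_succ, Finset.mul_sum,
        add_assoc, ← Finset.sum_add_distrib]
      congr 1
      · simp only [Nat.cast_zero, qbinom_zero_right]
      · refine Finset.sum_congr rfl ?_
        rintro ⟨a, b⟩ hab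
        rw [Finset.HasAntidiagonal.mem_antidiagonal] at hab
        dsimp only at hab ⊢
        rw [qbinom_succ_succ]
        rcases lt_or_ge m a with ha | ha
        · rw [qbinom_eq_zero_of_lt (i := (a : ℤ)) (by omega)]
          ring
        rcases lt_or_ge n b with hb | hb
        · rw [qbinom_eq_zero_of_lt (i := (b : ℤ)) (by omega)]
          ring
        have he : m + n - r = (m - a) + (n - b) := by omega
        rw [he]
        ring

/-- For all integers `N ≥ 0` and `h ≥ 1`,
`[2N+2h choose h-1] = Σ_{k=0}^{⌊(h-1)/2⌋} Σ_{j=k}^{h-k-1}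
  q^{k(N+k+1)+j(N+j+1)} [N+h choose j] [j choose k] [N+h-j choose h-j-k-1]`. -/
theorem double_expansion (N h : ℕ) (hh : 1 ≤ h) :
    qbinom (2 * (N : ℤ) + 2 * h) ((h : ℤ) - 1) =
      ∑ k ∈ Finset.range ((h - 1) / 2 + 1), ∑ j ∈ Finset.Icc k (h - k - 1),
        q ^ (k * (N + k + 1) + j * (N + j + 1)) *
          qbinom ((N : ℤ) + h) (j : ℤ) * qbinom (j : ℤ) (k : ℤ) *
          qbinom ((N : ℤ) + h - j) ((h : ℤ) - j - k - 1) := by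
  obtain ⟨r, rfl⟩ : ∃ r, h = r + 1 := ⟨h - 1, by omega⟩
  have hsummand : ∀ j ∈ Finset.range (r + 1),
      q ^ (j * (N + j + 1)) * qbinom ((N + (r + 1) : ℕ) : ℤ) (j : ℤ) *
          qbinom ((N + (r + 1) : ℕ) : ℤ) ((r - j : ℕ) : ℤ) =
        ∑ k ∈ Finset.range (r + 1),
          q ^ (k * (N + k + 1) + j * (N + j + 1)) *
            qbinom ((N : ℤ) + (r + 1 : ℕ)) (j : ℤ) * qbinom (j : ℤ) (k : ℤ) *
            qbinom ((N : ℤ) + (r + 1 : ℕ) - j) (((r + 1 : ℕ) : ℤ) - j - k - 1) := by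
    intro j hj
    rw [Finset.mem_range] at hj
    have hV := qbinom_add_eq_sum_antidiagonal j (N + (r + 1) - j) (r - j)
    rw [Finset.Nat.sum_antidiagonal_eq_sum_range_succ_mk,
      show j + (N + (r + 1) - j) = N + (r + 1) by omega] at hV
    rw [hV, Finset.mul_sum]
    refine Finset.sum_subset_zero_on_sdiff (Finset.range_subset_range.mpr (by omega)) ?_ ?_
    · intro k hk
      simp only [Finset.mem_sdiff, Finset.mem_range] at hk
      rw [qbinom_eq_zero_of_neg (i := ((r + 1 : ℕ) : ℤ) - j - k - 1) (by omega), mul_zero]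
    · intro k hk
      rw [Finset.mem_range] at hk
      dsimp only
      rw [show N + (r + 1) - j - (r - j - k) = N + k + 1 by omega,
        show ((N + (r + 1) - j : ℕ) : ℤ) = (N : ℤ) + (r + 1 : ℕ) - j by omega,
        show ((r - j - k : ℕ) : ℤ) = ((r + 1 : ℕ) : ℤ) - j - k - 1 by omega, Nat.cast_add N]
      ring
  have hV := qbinom_add_eq_sum_antidiagonal (N + (r + 1)) (N + (r + 1)) r
  rw [Finset.Nat.sum_antidiagonal_eq_sum_range_succ_mk] at hV
  rw [show 2 * (N : ℤ) + 2 * (r + 1 : ℕ) = ((N + (r + 1) + (N + (r + 1)) : ℕ) : ℤ) by omega,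
    show ((r + 1 : ℕ) : ℤ) - 1 = (r : ℤ) by omega, hV]
  have hexp : ∀ j ∈ Finset.range (r + 1), N + (r + 1) - (r - j) = N + j + 1 := by
    intro j hj
    rw [Finset.mem_range] at hj
    omega
  rw [Finset.sum_congr rfl fun j hj =>
    (by rw [hexp j hj] : _ = _).trans (hsummand j hj), Finset.sum_comm]
  symm
  refine Finset.sum_subset_zero_on_sdiff (Finset.range_subset_range.mpr (by omega)) ?_ ?_
  · intro k hk
    simp only [Finset.mem_sdiff, Finset.mem_range] at hk
    refine Finset.sum_eq_zero fun j _ => ?_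
    rcases lt_or_ge j k with hjk | hjk
    · rw [qbinom_eq_zero_of_lt (m := (j : ℤ)) (i := (k : ℤ)) (by omega), mul_zero, zero_mul]
    · rw [qbinom_eq_zero_of_neg (i := ((r + 1 : ℕ) : ℤ) - j - k - 1) (by omega), mul_zero]
  · intro k hk
    rw [Finset.mem_range] at hk
    refine Finset.sum_subset ?_ ?_
    · intro j hj
      rw [Finset.mem_Icc] at hj
      rw [Finset.mem_range]
      omega
    · intro j _ hj
      rw [Finset.mem_Icc] at hj
      rcases lt_or_ge j k with hjk | hjk
      · rw [qbinom_eq_zero_of_lt (m := (j : ℤ)) (i := (k : ℤ)) (by omega), mul_zero, zero_mul]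
      · rw [qbinom_eq_zero_of_neg (i := ((r + 1 : ℕ) : ℤ) - j - k - 1) (by omega), mul_zero]

end
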